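/- Let g : {0,1}^m → {0,1} be a monotone Boolean function and f : {0,1}^n → {0,1} any total Boolean function, and let h : {0,1}^{mn} → {0,1} be their composition h(x¹,…,x^m) = g(f(x¹),…,f(x^m)). Then for each b ∈ {0,1}, the one-sided sensitivity satisfies s_b(h) ≤ s_b(g)·s_b(f). -/

import Mathlib

/-!
Fix `z` with `h z = b`, and put `y j = f (z_j)`, where `z_j` is the `j`-th block of `z`.
Flipping bit `(j, i)` changes `y` at most in coordinate `j`, so if it changes `h` then `i` is
sensitive for `f` at `z_j` and `j` is sensitive for `g` at `y`. Since `g` is monotone, a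
coordinate sensitive at `y` satisfies `y j = g y = b` (`eq_of_sensitive`), so `f (z_j) = b`.
Hence at most `s_b(g)` blocks contain sensitive bits, and each contains at most `s_b(f)` of them;
without monotonicity the latter bound would involve `s_{¬b}(f)` as well.
-/

/-- Sensitivity of a Boolean function `F` (on an arbitrary finite set of
coordinates) at input `z`. -/
def sensAt {ι : Type*} [Fintype ι] [DecidableEq ι]
    (F : (ι → Bool) → Bool) (z : ι → Bool) : ℕ :=
  (Finset.univ.filter fun i : ι => F (Function.update z i (!z i)) ≠ F z).card

/-- `b`-sensitivity of `F`: the maximum sensitivity over inputs with value `b`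
(`0` if no such input exists). -/
def sensB {ι : Type*} [Fintype ι] [DecidableEq ι]
    (F : (ι → Bool) → Bool) (b : Bool) : ℕ :=
  (Finset.univ.filter fun z => F z = b).sup (sensAt F)

theorem sensAt_le_sensB {ι : Type*} [Fintype ι] [DecidableEq ι]
    (F : (ι → Bool) → Bool) {b : Bool} {z : ι → Bool} (hz : F z = b) :
    sensAt F z ≤ sensB F b :=
  Finset.le_sup (f := sensAt F) (by simp [hz])

/-- A sensitive coordinate of a monotone function carries the value of the function. -/
theorem eq_of_sensitive {m : ℕ} {g : (Fin m → Bool) → Bool}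
    (hg : ∀ x y : Fin m → Bool, (∀ j, x j ≤ y j) → g x ≤ g y)
    {y : Fin m → Bool} {j : Fin m} (h : g (Function.update y j (!y j)) ≠ g y) :
    y j = g y := by
  cases hy : y j with
  | false =>
    have hle := hg y (Function.update y j (!y j)) fun k => by
      by_cases hk : k = j
      · subst hk; simp [hy]
      · simp [hk]
    revert hle h
    rw [hy]
    cases g y <;> cases g (Function.update y j (!false)) <;> simp
  | true =>
    have hle := hg (Function.update y j (!y j)) y fun k => by
      by_cases hk : k = j
      · subst hk; simp [hy]
      · simp [hk]
    revert hle h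
    rw [hy]
    cases g y <;> cases g (Function.update y j (!true)) <;> simp

theorem blocks_update {m n : ℕ} (f : (Fin n → Bool) → Bool) (z : Fin m × Fin n → Bool)
    (j : Fin m) (i : Fin n) (v : Bool) :
    (fun j' => f fun i' => Function.update z (j, i) v (j', i')) =
      Function.update (fun j' => f fun i' => z (j', i')) j
        (f (Function.update (fun i' => z (j, i')) i v)) := by
  funext j'
  by_cases hj : j' = j
  · subst hj
    simp only [Function.update_self]
    congr 1
    funext i'
    simp [Function.update_apply]
  · simp [hj]

theorem sensitive_comp {m n : ℕ} {g : (Fin m → Bool) → Bool} {f : (Fin n → Bool) → Bool}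
    {z : Fin m × Fin n → Bool} {j : Fin m} {i : Fin n}
    (h : g (fun j' => f fun i' => Function.update z (j, i) (!z (j, i)) (j', i')) ≠
      g fun j' => f fun i' => z (j', i')) :
    f (Function.update (fun i' => z (j, i')) i (!z (j, i))) ≠ f (fun i' => z (j, i')) ∧
      g (Function.update (fun j' => f fun i' => z (j', i')) j (!f fun i' => z (j, i'))) ≠
        g fun j' => f fun i' => z (j', i') := by
  rw [blocks_update] at h
  have hf : f (Function.update (fun i' => z (j, i')) i (!z (j, i))) ≠
      f (fun i' => z (j, i')) := by
    intro he
    rw [he] at h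
    exact h (congrArg g (Function.update_eq_self j fun j' => f fun i' => z (j', i')))
  rw [Bool.eq_not_of_ne hf] at h
  exact ⟨hf, h⟩

/-- If `g` is monotone and `h = g ∘ (f,…,f)` is the composition of `g : {0,1}^m → {0,1}`
with `f : {0,1}^n → {0,1}`, then for each `b ∈ {0,1}` the one-sided sensitivity
satisfies `s_b(h) ≤ s_b(g) · s_b(f)`. -/
theorem sensB_comp_le {m n : ℕ} (g : (Fin m → Bool) → Bool)
    (f : (Fin n → Bool) → Bool)
    (hg : ∀ x y : Fin m → Bool, (∀ j, x j ≤ y j) → g x ≤ g y) (b : Bool) :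
    sensB (fun z : Fin m × Fin n → Bool => g fun j => f fun i => z (j, i)) b
      ≤ sensB g b * sensB f b := by
  refine Finset.sup_le fun z hz => ?_
  have hz' : g (fun j => f fun i => z (j, i)) = b := (Finset.mem_filter.1 hz).2
  refine le_trans ?_ (Nat.mul_le_mul_right _ (sensAt_le_sensB g hz'))
  rw [mul_comm]
  refine Finset.card_le_mul_card_image_of_maps_to (f := Prod.fst) ?_ _ ?_
  · rintro ⟨j, i⟩ h
    exact Finset.mem_filter.2 ⟨Finset.mem_univ _, (sensitive_comp (Finset.mem_filter.1 h).2).2⟩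
  · intro j hj
    have hfj : f (fun i => z (j, i)) = b :=
      (eq_of_sensitive hg (Finset.mem_filter.1 hj).2).trans hz'
    refine le_trans ?_ (sensAt_le_sensB f hfj)
    refine Finset.card_le_card_of_injOn Prod.snd ?_ ?_
    · rintro ⟨j', i⟩ h
      obtain ⟨h_sens, rfl⟩ := Finset.mem_filter.1 h
      exact Finset.mem_filter.2 ⟨Finset.mem_univ _, (sensitive_comp (Finset.mem_filter.1 h_sens).2).1⟩
    · rintro ⟨j₁, i₁⟩ h₁ ⟨j₂, i₂⟩ h₂ he
      exact Prod.ext ((Finset.mem_filter.1 h₁).2.trans (Finset.mem_filter.1 h₂).2.symm) he
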